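/- arXiv:2306.02803 — 3 statements merged into one kernel-verified Lean document; each statement's English description precedes it below -/
import Mathlib

section
/- Let ε > 0, δ > 1, r ∈ (0,1], and let ψ : ℝ → ℝ be an infinitely differentiable nonnegative function vanishing outside the interval (ε δ⁻¹, ε) with ∫_ℝ ψ(y) dy = 1. Define u(x) = ∫_ℝ |x − y|^r ψ(y) dy, i.e. u is the convolution of the function x ↦ |x|^r with ψ. Then u is twice continuously differentiable on ℝ, and for every x ∈ ℝ one has |x|^r ≤ ε^r + u(x) and u(x) ≤ |x|^r + ε^r. -/
open MeasureTheory Real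

/-- If `ψ` is a smooth nonnegative function vanishing outside `(ε δ⁻¹, ε)` with total
integral `1`, and `u` is the convolution of `x ↦ |x|^r` with `ψ` (for `r ∈ (0,1]`), then
`u` is `C²` and `|x|^r ≤ ε^r + u x` and `u x ≤ |x|^r + ε^r` for every `x`. -/
theorem stmt_1 (ε δ r : ℝ) (hε : 0 < ε) (hδ : 1 < δ) (hr0 : 0 < r) (hr1 : r ≤ 1)
    (ψ : ℝ → ℝ) (hψ_smooth : ContDiff ℝ (⊤ : ℕ∞) ψ) (hψ_nonneg : ∀ x, 0 ≤ ψ x)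
    (hψ_supp : ∀ x, x ∉ Set.Ioo (ε * δ⁻¹) ε → ψ x = 0)
    (hψ_int : ∫ y, ψ y = 1)
    (u : ℝ → ℝ) (hu : ∀ x, u x = ∫ y, |x - y| ^ r * ψ y) :
    ContDiff ℝ 2 u ∧ ∀ x : ℝ, |x| ^ r ≤ ε ^ r + u x ∧ u x ≤ |x| ^ r + ε ^ r := by
  have hsupp : HasCompactSupport ψ := by
    apply HasCompactSupport.intro (isCompact_Icc (a := ε * δ⁻¹) (b := ε))
    intro x hx
    exact hψ_supp x (fun h => hx (Set.Ioo_subset_Icc_self h))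
  have hcont : Continuous (fun x : ℝ => |x| ^ r) :=
    continuous_abs.rpow_const (fun _ => Or.inr hr0.le)
  have hψi : Integrable ψ := hψ_smooth.continuous.integrable_of_hasCompactSupport hsupp
  have hsub : ∀ a b : ℝ, |a + b| ^ r ≤ |a| ^ r + |b| ^ r := by
    intro a b
    refine (Real.rpow_le_rpow (abs_nonneg _) (abs_add_le a b) hr0.le).trans ?_
    have := NNReal.rpow_add_le_add_rpow ⟨|a|, abs_nonneg a⟩ ⟨|b|, abs_nonneg b⟩ hr0.le hr1
    exact_mod_cast this
  have hy : ∀ y ∈ Set.Ioo (ε * δ⁻¹) ε, |y| ^ r ≤ ε ^ r := by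
    intro y hy
    have h0 : 0 < ε * δ⁻¹ := by positivity
    have : |y| ≤ ε := by rw [abs_of_pos (h0.trans hy.1)]; exact hy.2.le
    exact Real.rpow_le_rpow (abs_nonneg _) this hr0.le
  constructor
  · have : u = convolution (fun x : ℝ => |x| ^ r) ψ (ContinuousLinearMap.mul ℝ ℝ) volume := by
      ext x
      rw [hu, convolution_eq_swap]
      rfl
    rw [this]
    exact hsupp.contDiff_convolution_right _ hcont.locallyIntegrable
      (hψ_smooth.of_le (by exact_mod_cast le_top))
  · intro x
    have hint : Integrable (fun y => |x - y| ^ r * ψ y) := by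
      apply Continuous.integrable_of_hasCompactSupport
      · exact (hcont.comp (continuous_const.sub continuous_id)).mul hψ_smooth.continuous
      · exact hsupp.mul_left
    have hc : ∀ c : ℝ, ∫ y, c * ψ y = c := by
      intro c; rw [integral_const_mul, hψ_int, mul_one]
    constructor
    · have : |x| ^ r - ε ^ r ≤ u x := by
        rw [hu, ← hc (|x| ^ r - ε ^ r)]
        refine integral_mono (hψi.const_mul _) hint (fun y => ?_)
        by_cases h : y ∈ Set.Ioo (ε * δ⁻¹) ε
        · refine mul_le_mul_of_nonneg_right ?_ (hψ_nonneg y)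
          have h1 := hsub (x - y) y
          rw [sub_add_cancel] at h1
          linarith [hy y h]
        · simp [hψ_supp y h]
      linarith
    · rw [hu, ← hc (|x| ^ r + ε ^ r)]
      refine integral_mono hint (hψi.const_mul _) (fun y => ?_)
      by_cases h : y ∈ Set.Ioo (ε * δ⁻¹) ε
      · refine mul_le_mul_of_nonneg_right ?_ (hψ_nonneg y)
        have h1 := hsub x (-y)
        rw [abs_neg, ← sub_eq_add_neg] at h1
        linarith [hy y h]
      · simp [hψ_supp y h]
end

section
/- Let (Ω, F, P) be a probability space with a filtration (F_t)_{t ∈ [0,T]}, and let Z = (Z_t)_{t ∈ [0,T]} be a real-valued adapted process with right-continuous (càdlàg) sample paths such that E[|Z_t|] < ∞ for every t ∈ [0,T]. Suppose V ∈ ℝ is such that for every finite subdivision 0 = t₀ < t₁ < ⋯ < t_{n+1} = T one has E[ Σ_{i=0}^{n} | E[ Z_{t_i} − Z_{t_{i+1}} | F_{t_i} ] | ] ≤ V. Then for every h > 0, h · P( sup_{t ∈ [0,T]} |Z_t| > h ) ≤ V + E[ |Z_T| ]. -/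
open MeasureTheory Real Set

lemma aux_step {Ω : Type*} {m0 : MeasurableSpace Ω} (P : Measure Ω) [IsProbabilityMeasure P]
    (m : MeasurableSpace Ω) (hm : m ≤ m0) (X Y : Ω → ℝ) (hX : Measurable[m] X)
    (hXi : Integrable X P) (hYi : Integrable Y P) (A : Set Ω) (hA : MeasurableSet[m] A) :
    ∫ ω in A, |X ω| ∂P ≤ ∫ ω in A, |Y ω| ∂P + ∫ ω, |(P[(fun ω => X ω - Y ω) | m]) ω| ∂P := by
  have h1 : P[(fun ω => X ω - Y ω) | m] =ᵐ[P] P[X|m] - P[Y|m] := condExp_sub hXi hYi m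
  have h2 : P[X|m] = X := condExp_of_stronglyMeasurable hm hX.stronglyMeasurable hXi
  have h3 : ∫ ω in A, |(P[Y|m]) ω| ∂P ≤ ∫ ω in A, |Y ω| ∂P :=
    setIntegral_abs_condExp_le hA Y
  have hDi : Integrable (fun ω => |(P[(fun ω => X ω - Y ω) | m]) ω|) P := integrable_condExp.abs
  have hCi : Integrable (fun ω => |(P[Y|m]) ω|) P := integrable_condExp.abs
  have h4 : ∫ ω in A, |X ω| ∂P ≤
      ∫ ω in A, (|(P[Y|m]) ω| + |(P[(fun ω => X ω - Y ω) | m]) ω|) ∂P := by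
    apply setIntegral_mono_ae hXi.abs.integrableOn (hCi.add hDi).integrableOn
    filter_upwards [h1] with ω hω
    rw [h2] at hω
    simp only [Pi.sub_apply] at hω
    change |X ω| ≤ |(P[Y|m]) ω| + |(P[(fun ω => X ω - Y ω) | m]) ω|
    rw [hω]
    have := abs_add_le ((P[Y|m]) ω) (X ω - (P[Y|m]) ω)
    simpa using this
  rw [integral_add hCi.integrableOn hDi.integrableOn] at h4
  have h5 : ∫ ω in A, |(P[(fun ω => X ω - Y ω) | m]) ω| ∂P
      ≤ ∫ ω, |(P[(fun ω => X ω - Y ω) | m]) ω| ∂P :=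
    setIntegral_le_integral hDi (Filter.Eventually.of_forall fun ω => abs_nonneg _)
  linarith

lemma aux_discrete {Ω : Type*} {m0 : MeasurableSpace Ω} (P : Measure Ω) [IsProbabilityMeasure P]
    (N : ℕ) (G : ℕ → MeasurableSpace Ω) (hG : ∀ i ≤ N, G i ≤ m0)
    (hmono : ∀ i j, i ≤ j → j ≤ N → G i ≤ G j)
    (X : ℕ → Ω → ℝ) (hX : ∀ i ≤ N, Measurable[G i] (X i)) (hXi : ∀ i ≤ N, Integrable (X i) P)
    (h : ℝ) (hh : 0 < h) : ∀ k ≤ N,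
    MeasurableSet[G k] {ω | ∃ i ≤ k, h < |X i ω|} ∧
    h * P.real {ω | ∃ i ≤ k, h < |X i ω|} ≤ ∫ ω in {ω | ∃ i ≤ k, h < |X i ω|}, |X k ω| ∂P
      + ∑ i ∈ Finset.range k, ∫ ω, |(P[(fun ω => X i ω - X (i+1) ω) | G i]) ω| ∂P := by
  have key : ∀ (j : ℕ), j ≤ N → ∀ A : Set Ω, MeasurableSet[m0] A → (∀ ω ∈ A, h < |X j ω|) →
      h * P.real A ≤ ∫ ω in A, |X j ω| ∂P := by
    intro j hj A hA hlt
    have := setIntegral_mono_on (μ := P) (f := fun _ => h) (g := fun ω => |X j ω|) (s := A)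
      (integrable_const h).integrableOn (hXi j hj).abs.integrableOn hA
      (fun ω hω => (hlt ω hω).le)
    rw [setIntegral_const, smul_eq_mul] at this
    linarith
  have hms : ∀ j ≤ N, MeasurableSet[G j] {ω | h < |X j ω|} := by
    intro j hj
    have hs : MeasurableSet {x : ℝ | h < |x|} :=
      (isOpen_lt continuous_const continuous_abs).measurableSet
    exact hX j hj hs
  intro k
  induction k with
  | zero =>
    intro hk
    have e : {ω | ∃ i ≤ 0, h < |X i ω|} = {ω | h < |X 0 ω|} := by ext ω; simp
    rw [e]
    refine ⟨hms 0 hk, ?_⟩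
    simp only [Finset.range_zero, Finset.sum_empty, add_zero]
    exact key 0 hk _ (hG 0 hk _ (hms 0 hk)) (fun ω hω => hω)
  | succ k ih =>
    intro hk
    have hk' : k ≤ N := by omega
    obtain ⟨ihm, ihb⟩ := ih hk'
    set E : Set Ω := {ω | ∃ i ≤ k, h < |X i ω|} with hE
    have e : {ω | ∃ i ≤ k + 1, h < |X i ω|} = E ∪ ({ω | h < |X (k+1) ω|} \ E) := by
      rw [Set.union_diff_self]
      ext ω
      simp only [hE, mem_setOf_eq, mem_union]
      constructor
      · rintro ⟨i, hi, hlt⟩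
        rcases Nat.le_succ_iff.1 hi with h1 | h1
        · exact Or.inl ⟨i, h1, hlt⟩
        · subst h1; exact Or.inr hlt
      · rintro (⟨i, hi, hlt⟩ | hlt)
        · exact ⟨i, by omega, hlt⟩
        · exact ⟨k+1, le_rfl, hlt⟩
    have hEm : MeasurableSet[G (k+1)] E := hmono k (k+1) (by omega) hk _ ihm
    have hDm : MeasurableSet[G (k+1)] ({ω | h < |X (k+1) ω|} \ E) :=
      MeasurableSet.diff (hms _ hk) hEm
    rw [e]
    refine ⟨MeasurableSet.union hEm hDm, ?_⟩
    have hD0 := hG _ hk _ hDm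
    rw [measureReal_union disjoint_sdiff_right hD0,
      setIntegral_union disjoint_sdiff_right hD0 (hXi _ hk).abs.integrableOn
        (hXi _ hk).abs.integrableOn, Finset.sum_range_succ]
    have h1 := key (k+1) hk _ hD0 (fun ω hω => hω.1)
    have h2 := aux_step P (G k) (hG k hk') (X k) (X (k+1)) (hX k hk') (hXi k hk') (hXi _ hk) E ihm
    linarith

lemma aux_finset {Ω : Type*} {m0 : MeasurableSpace Ω} (P : Measure Ω) [IsProbabilityMeasure P]
    (T : ℝ) (hT : 0 < T) (ℱ : Filtration ℝ m0)
    (Z : ℝ → Ω → ℝ)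
    (hZ_adapted : Adapted ℱ Z)
    (hZ_int : ∀ t ∈ Icc 0 T, Integrable (Z t) P)
    (V : ℝ)
    (hV : ∀ (n : ℕ) (t : ℕ → ℝ), t 0 = 0 → t (n + 1) = T → (∀ i ≤ n, t i < t (i + 1)) →
      (∫ ω, ∑ i ∈ Finset.range (n + 1),
        |(P[(fun ω => Z (t i) ω - Z (t (i + 1)) ω) | ℱ (t i)]) ω| ∂P) ≤ V)
    (h : ℝ) (hh : 0 < h) (S : Finset ℝ) (hS : ∀ t ∈ S, t ∈ Icc 0 T) :
    h * P.real {ω | ∃ t ∈ S, h < |Z t ω|} ≤ V + ∫ ω, |Z T ω| ∂P := by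
  set F : Finset ℝ := insert 0 (insert T S) with hF
  have hFI : ∀ t ∈ F, t ∈ Icc 0 T := by
    intro t ht
    simp only [hF, Finset.mem_insert] at ht
    rcases ht with rfl | rfl | ht
    · exact ⟨le_rfl, hT.le⟩
    · exact ⟨hT.le, le_rfl⟩
    · exact hS t ht
  have h0F : (0:ℝ) ∈ F := by simp [hF]
  have hTF : T ∈ F := by simp [hF]
  have hcard : 1 < F.card := Finset.one_lt_card.2 ⟨0, h0F, T, hTF, hT.ne⟩
  obtain ⟨n, hn⟩ : ∃ n, F.card = n + 2 := ⟨F.card - 2, by omega⟩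
  let f := F.orderEmbOfFin hn
  let t : ℕ → ℝ := fun i => if hi : i < n + 2 then f ⟨i, hi⟩ else 0
  have htf : ∀ i (hi : i < n + 2), t i = f ⟨i, hi⟩ := fun i hi => by simp [t, hi]
  have htF : ∀ i ≤ n + 1, t i ∈ F := fun i hi => by
    rw [htf i (by omega)]; exact F.orderEmbOfFin_mem hn _
  have hsurj : ∀ s ∈ F, ∃ i ≤ n + 1, t i = s := by
    intro s hs
    have : s ∈ Set.range f := by
      rw [Finset.range_orderEmbOfFin]; exact hs
    obtain ⟨i, hi⟩ := this
    exact ⟨i, by omega, by rw [htf i i.2]; exact hi⟩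
  have hmonot : ∀ i j, i ≤ j → j ≤ n + 1 → t i ≤ t j := by
    intro i j hij hj
    rw [htf i (by omega), htf j (by omega)]
    exact f.monotone hij
  have hstrict : ∀ i ≤ n, t i < t (i+1) := by
    intro i hi
    rw [htf i (by omega), htf (i+1) (by omega)]
    exact f.strictMono (by simp [Fin.lt_def])
  have ht0 : t 0 = 0 := by
    obtain ⟨i, hi, hi'⟩ := hsurj 0 h0F
    have := hmonot 0 i (by omega) hi
    have := (hFI _ (htF 0 (by omega))).1
    linarith
  have htT : t (n+1) = T := by
    obtain ⟨i, hi, hi'⟩ := hsurj T hTF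
    have := hmonot i (n+1) hi le_rfl
    have := (hFI _ (htF (n+1) le_rfl)).2
    linarith
  have hVn := hV n t ht0 htT hstrict
  rw [integral_finset_sum _ (fun i _ => integrable_condExp.abs)] at hVn
  have hd := (aux_discrete P (n+1) (fun i => ℱ (t i)) (fun i _ => ℱ.le _)
    (fun i j hij hj => ℱ.mono (hmonot i j hij hj)) (fun i => Z (t i))
    (fun i _ => hZ_adapted (t i)) (fun i hi => hZ_int _ (hFI _ (htF i hi))) h hh (n+1) le_rfl).2
  have hsub : P.real {ω | ∃ t ∈ S, h < |Z t ω|} ≤ P.real {ω | ∃ i ≤ n+1, h < |Z (t i) ω|} := by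
    refine measureReal_mono ?_ (measure_ne_top _ _)
    rintro ω ⟨s, hs, hlt⟩
    obtain ⟨i, hi, rfl⟩ := hsurj s (by simp [hF, hs])
    exact ⟨i, hi, hlt⟩
  have h1 : ∫ ω in {ω | ∃ i ≤ n+1, h < |Z (t i) ω|}, |Z (t (n+1)) ω| ∂P ≤ ∫ ω, |Z T ω| ∂P := by
    rw [htT]
    exact setIntegral_le_integral (hZ_int T ⟨hT.le, le_rfl⟩).abs
      (Filter.Eventually.of_forall fun ω => abs_nonneg _)
  have h2 := mul_le_mul_of_nonneg_left hsub hh.le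
  linarith



/-- Kurtz's maximal inequality for quasi-martingales: if `Z` is a right-continuous adapted
integrable process on `[0,T]` whose mean variation over every finite subdivision of `[0,T]`
is bounded by `V`, then `h * P(sup_{t ∈ [0,T]} |Z t| > h) ≤ V + E[|Z_T|]` for every `h > 0`. -/
theorem stmt_4 {Ω : Type*} {m0 : MeasurableSpace Ω} (P : Measure Ω) [IsProbabilityMeasure P]
    (T : ℝ) (hT : 0 < T) (ℱ : Filtration ℝ m0)
    (Z : ℝ → Ω → ℝ)
    (hZ_adapted : Adapted ℱ Z)
    (hZ_rc : ∀ ω : Ω, ∀ t ∈ Ico 0 T, ContinuousWithinAt (fun s => Z s ω) (Ici t) t)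
    (hZ_int : ∀ t ∈ Icc 0 T, Integrable (Z t) P)
    (V : ℝ)
    (hV : ∀ (n : ℕ) (t : ℕ → ℝ), t 0 = 0 → t (n + 1) = T → (∀ i ≤ n, t i < t (i + 1)) →
      (∫ ω, ∑ i ∈ Finset.range (n + 1),
        |(P[(fun ω => Z (t i) ω - Z (t (i + 1)) ω) | ℱ (t i)]) ω| ∂P) ≤ V) :
    ∀ h : ℝ, 0 < h →
      h * (P {ω | h < sSup ((fun t => |Z t ω|) '' Icc 0 T)}).toReal
        ≤ V + ∫ ω, |Z T ω| ∂P := by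

  intro h hh
  set S : Set ℝ := insert T (range ((↑) : ℚ → ℝ) ∩ Icc 0 T) with hSdef
  have hSc : S.Countable := ((countable_range _).mono inter_subset_left).insert T
  obtain ⟨d, hd⟩ := hSc.exists_eq_range ⟨T, by simp [hSdef]⟩
  have hdI : ∀ i, d i ∈ Icc 0 T := by
    intro i
    have : d i ∈ S := hd ▸ mem_range_self i
    rcases this with h1 | h1
    · rw [h1]; exact ⟨hT.le, le_rfl⟩
    · exact h1.2
  let U : ℕ → Set Ω := fun n => {ω | ∃ t ∈ (Finset.range n).image d, h < |Z t ω|}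
  have hUmono : Monotone U := by
    rintro a b hab ω ⟨t, ht, hlt⟩
    exact ⟨t, Finset.image_subset_image (Finset.range_mono hab) ht, hlt⟩
  have hUb : ∀ n, h * P.real (U n) ≤ V + ∫ ω, |Z T ω| ∂P := by
    intro n
    apply aux_finset P T hT ℱ Z hZ_adapted hZ_int V hV h hh
    intro t ht
    obtain ⟨i, -, rfl⟩ := Finset.mem_image.1 ht
    exact hdI i
  have hlim : Filter.Tendsto (fun n => P.real (U n)) Filter.atTop (nhds (P.real (⋃ n, U n))) :=
    (ENNReal.tendsto_toReal (measure_ne_top _ _)).comp (tendsto_measure_iUnion_atTop hUmono)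
  have hUU : h * P.real (⋃ n, U n) ≤ V + ∫ ω, |Z T ω| ∂P :=
    le_of_tendsto' (hlim.const_mul h) hUb
  refine le_trans (mul_le_mul_of_nonneg_left ?_ hh.le) hUU
  change P.real _ ≤ _
  refine measureReal_mono ?_ (measure_ne_top _ _)
  intro ω hω
  have hω' : h < sSup ((fun t => |Z t ω|) '' Icc 0 T) := hω
  obtain ⟨_, ⟨t, ht, rfl⟩, hlt⟩ := exists_lt_of_lt_csSup
    ((nonempty_Icc.2 hT.le).image _) hω'
  have hfind : ∃ s ∈ S, h < |Z s ω| := by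
    rcases eq_or_lt_of_le ht.2 with h1 | h1
    · exact ⟨T, by simp [hSdef], h1 ▸ hlt⟩
    · have hc := (hZ_rc ω t ⟨ht.1, h1⟩).abs
      have hev : ∀ᶠ s in nhdsWithin t (Ioi t), h < |Z s ω| :=
        (hc.mono Ioi_subset_Ici_self).eventually (lt_mem_nhds hlt)
      obtain ⟨u, hu, hsub⟩ := (mem_nhdsGT_iff_exists_Ioo_subset).1 hev
      obtain ⟨q, hq1, hq2⟩ := exists_rat_btwn (lt_min (mem_Ioi.1 hu) h1)
      refine ⟨q, Or.inr ⟨mem_range_self q, ⟨ht.1.trans hq1.le, ?_⟩⟩, ?_⟩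
      · exact hq2.le.trans (min_le_right _ _)
      · exact hsub ⟨hq1, hq2.trans_le (min_le_left _ _)⟩
  obtain ⟨s, hs, hlt'⟩ := hfind
  rw [hd] at hs
  obtain ⟨i, rfl⟩ := hs
  exact mem_iUnion.2 ⟨i+1, d i, Finset.mem_image.2 ⟨i, by simp, rfl⟩, hlt'⟩
end

section
/- Let T > 0, let a : [0,T] → ℝ be a bounded measurable function, let μ be a finite nonnegative Borel measure on [0,T], and let Y : [0,T] → ℝ be a bounded measurable function satisfying Y(t) = ∫₀^t a(s) Y(s) ds + μ([0,t]) for every t ∈ [0,T]. Then for every t ∈ [0,T], Y(t) = ∫_{[0,t]} exp( ∫_s^t a(u) du ) dμ(s); consequently, writing M = sup_{s ∈ [0,T]} |a(s)|, one has Y(t) ≥ e^{−M t} μ([0,t]) for every t ∈ [0,T], and in particular Y(t) > 0 whenever μ([0,t]) > 0. -/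
open MeasureTheory Real Set

lemma core (t : ℝ) (ht : 0 ≤ t) (b y : ℝ → ℝ) (hb : Measurable b) (hy : Measurable y)
    (K L : ℝ) (hbK : ∀ s, |b s| ≤ K) (hyL : ∀ s, |y s| ≤ L)
    (μ : Measure ℝ) [IsFiniteMeasure μ]
    (hY : ∀ r ∈ Icc 0 t, y r = (∫ s in (0:ℝ)..r, b s * y s) + (μ (Icc 0 r)).toReal) :
    y t = ∫ s in Icc (0:ℝ) t, Real.exp (∫ u in s..t, b u) ∂μ := by
  have hK0 : 0 ≤ K := (abs_nonneg _).trans (hbK 0)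
  have hbi : ∀ p q, IntervalIntegrable b volume p q := fun p q =>
    (intervalIntegrable_const (c := K)).mono_fun hb.aestronglyMeasurable
      (Filter.Eventually.of_forall fun x => by
        simpa [abs_of_nonneg hK0] using hbK x)
  have hbyi : ∀ p q, IntervalIntegrable (fun s => b s * y s) volume p q := fun p q =>
    (intervalIntegrable_const (c := K * L)).mono_fun (hb.mul hy).aestronglyMeasurable
      (Filter.Eventually.of_forall fun x => by
        have := mul_le_mul (hbK x) (hyL x) (abs_nonneg _) hK0
        show |b x * y x| ≤ |K * L|
        rw [abs_mul]
        exact this.trans (le_abs_self _))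
  set A : ℝ → ℝ := fun x => ∫ u in (0:ℝ)..x, b u with hA
  set F : ℝ → ℝ := fun x => ∫ u in (0:ℝ)..x, b u * y u with hF
  set E : ℝ → ℝ := fun x => Real.exp (-A x) with hE
  have hAc : Continuous A := intervalIntegral.continuous_primitive hbi 0
  have hEc : Continuous E := by fun_prop
  have hA_ac : AbsolutelyContinuousOnInterval A 0 t :=
    (hbi 0 t).absolutelyContinuousOnInterval_intervalIntegral (by simp)
  have hF_ac : AbsolutelyContinuousOnInterval F 0 t :=
    (hbyi 0 t).absolutelyContinuousOnInterval_intervalIntegral (by simp)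
  have hAlip : LipschitzWith K.toNNReal A := by
    refine LipschitzWith.of_dist_le_mul fun p q => ?_
    rw [Real.dist_eq, Real.dist_eq, hA]
    simp only
    rw [intervalIntegral.integral_interval_sub_left (hbi _ _) (hbi _ _), Real.coe_toNNReal _ hK0]
    exact intervalIntegral.norm_integral_le_of_norm_le_const (f := b) (C := K) fun x _ => hbK x
  have hE_ac : AbsolutelyContinuousOnInterval E 0 t := by
    have hcomp : IsCompact (A '' uIcc 0 t) := isCompact_uIcc.image hAc
    obtain ⟨R, hR⟩ := hcomp.isBounded.subset_closedBall 0
    have h1 : ContDiffOn ℝ 1 (fun x : ℝ => Real.exp (-x)) (Metric.closedBall 0 R) := by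
      apply ContDiff.contDiffOn; fun_prop
    obtain ⟨C, hC⟩ := h1.exists_lipschitzOnWith (by decide) (convex_closedBall _ _)
      (isCompact_closedBall _ _)
    have := hC.comp (hAlip.lipschitzOnWith (s := uIcc 0 t)) (fun x hx => hR ⟨x, hx, rfl⟩)
    exact this.absolutelyContinuousOnInterval
  have hdE : ∀ᵐ x, x ∈ uIcc 0 t → deriv E x = - (b x * E x) := by
    filter_upwards [(hbi 0 t).ae_hasDerivAt_integral] with x hx hxt
    have h1 : HasDerivAt A (b x) x := hx hxt 0 (by simp)
    have h2 : HasDerivAt E (Real.exp (-A x) * -b x) x := h1.neg.exp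
    rw [h2.deriv]
    simp only [hE]; ring
  have hdF : ∀ᵐ x, x ∈ uIcc 0 t → deriv F x = b x * y x := by
    filter_upwards [(hbyi 0 t).ae_hasDerivAt_integral] with x hx hxt
    exact (hx hxt 0 (by simp)).deriv
  have e1 : ∫ x in (0:ℝ)..t, b x * E x * (μ (Icc 0 x)).toReal = E t * F t := by
    have h := hE_ac.integral_deriv_mul_eq_sub hF_ac
    have hF0 : F 0 = 0 := by simp [hF]
    rw [hF0, mul_zero, sub_zero] at h
    rw [← h]
    apply intervalIntegral.integral_congr_ae
    filter_upwards [hdE, hdF] with x h1 h2 hx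
    have hx' := uIoc_subset_uIcc hx
    rw [h1 hx', h2 hx']
    have := hY x (by rwa [uIcc_of_le ht] at hx')
    have e : (μ (Icc 0 x)).toReal = y x - F x := by rw [this]; simp [hF]
    rw [e]; ring
  have e2 : ∀ s ∈ Icc 0 t, ∫ x in s..t, b x * E x = E s - E t := by
    intro s hs
    have hsub : uIcc s t ⊆ uIcc 0 t := by
      rw [uIcc_of_le hs.2, uIcc_of_le ht]; exact Icc_subset_Icc_left hs.1
    have h := (hE_ac.mono hsub).integral_deriv_eq_sub
    have : ∫ x in s..t, deriv E x = ∫ x in s..t, -(b x * E x) := by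
      apply intervalIntegral.integral_congr_ae
      filter_upwards [hdE] with x h1 hx using h1 (hsub (uIoc_subset_uIcc hx))
    rw [this, intervalIntegral.integral_neg] at h
    linarith
  have e3 : ∫ x in (0:ℝ)..t, b x * E x * (μ (Icc 0 x)).toReal
      = ∫ s in Icc 0 t, (E s - E t) ∂μ := by
    have l : ∫ x in (0:ℝ)..t, b x * E x * (μ (Icc 0 x)).toReal
      = ∫ x in (0:ℝ)..t, ∫ s in Icc 0 t, (Ici s).indicator (fun x => b x * E x) x ∂μ := by
      apply intervalIntegral.integral_congr_ae
      refine Filter.Eventually.of_forall fun x hx => ?_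
      rw [uIoc_of_le ht] at hx
      have : ∀ s, (Ici s).indicator (fun x => b x * E x) x
          = (Iic x).indicator (fun _ => b x * E x) s := by
        intro s; simp [indicator]
      simp_rw [this]
      rw [setIntegral_indicator measurableSet_Iic, setIntegral_const]
      have : Icc 0 t ∩ Iic x = Icc 0 x := by
        ext z; simp only [mem_inter_iff, mem_Icc, mem_Iic]
        constructor
        · rintro ⟨⟨h1, _⟩, h3⟩; exact ⟨h1, h3⟩
        · rintro ⟨h1, h3⟩; exact ⟨⟨h1, h3.trans hx.2⟩, h3⟩
      rw [this, smul_eq_mul, mul_comm]; rfl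
    rw [l, intervalIntegral_integral_swap]
    · apply setIntegral_congr_fun measurableSet_Icc
      intro s hs
      simp only
      rw [← e2 s hs, intervalIntegral.integral_of_le ht, intervalIntegral.integral_of_le hs.2,
        setIntegral_indicator measurableSet_Ici, ← integral_Icc_eq_integral_Ioc (x := s)]
      apply setIntegral_congr_set
      have h0 : (Icc s t : Set ℝ) =ᵐ[volume] Ioc s t := Ioc_ae_eq_Icc.symm
      have h1 : (Ioc 0 t ∩ Ici s : Set ℝ) =ᵐ[volume] (Icc 0 t ∩ Ici s : Set ℝ) :=
        Ioc_ae_eq_Icc.inter (Filter.EventuallyEq.refl _ _)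
      have : Icc 0 t ∩ Ici s = Icc s t := by
        ext z; simp only [mem_inter_iff, mem_Icc, mem_Ici]
        constructor
        · rintro ⟨⟨h1, h2⟩, h3⟩; exact ⟨h3, h2⟩
        · rintro ⟨h1, h3⟩; exact ⟨⟨hs.1.trans h1, h3⟩, h1⟩
      rwa [this] at h1
    · obtain ⟨C, hC⟩ := hE_ac.exists_bound
      have hmeas : Measurable (Function.uncurry
          (fun (x s : ℝ) => (Ici s).indicator (fun x => b x * E x) x)) := by
        have : (Function.uncurry
          (fun (x s : ℝ) => (Ici s).indicator (fun x => b x * E x) x))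
          = {p : ℝ × ℝ | p.2 ≤ p.1}.indicator (fun p => b p.1 * E p.1) := by
          ext ⟨x, s⟩; simp [indicator]
        rw [this]
        refine Measurable.indicator ?_ (measurableSet_le measurable_snd measurable_fst)
        exact (hb.comp measurable_fst).mul (hEc.measurable.comp measurable_fst)
      have : IsFiniteMeasure (volume.restrict (uIoc 0 t)) := by
        rw [uIoc_of_le ht]; infer_instance
      refine Integrable.of_bound hmeas.aestronglyMeasurable (K * C) ?_
      have hq : ∀ᵐ x ∂(volume.restrict (uIoc 0 t)), x ∈ uIoc 0 t :=
        ae_restrict_mem measurableSet_uIoc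
      have hq2 := (Measure.quasiMeasurePreserving_fst
        (μ := volume.restrict (uIoc 0 t)) (ν := μ.restrict (Icc 0 t))).ae hq
      filter_upwards [hq2] with p hp
      refine (norm_indicator_le_norm_self (s := Ici p.2) (fun x => b x * E x) p.1).trans ?_
      rw [norm_mul]
      exact mul_le_mul (hbK _) (hC _ (uIoc_subset_uIcc hp)) (norm_nonneg _) hK0
  have hEt : 0 < E t := Real.exp_pos _
  have e4 : E t * y t = ∫ s in Icc 0 t, E s ∂μ := by
    have h := hY t ⟨ht, le_rfl⟩
    have h3 : E t * F t = ∫ s in Icc 0 t, (E s - E t) ∂μ := e1.symm.trans e3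
    rw [integral_sub (hEc.continuousOn.integrableOn_Icc) (integrable_const _),
      setIntegral_const, smul_eq_mul] at h3
    have : y t = F t + μ.real (Icc 0 t) := h
    rw [this]; linarith
  have e5 : ∀ s, Real.exp (∫ u in s..t, b u) = (E t)⁻¹ * E s := by
    intro s
    rw [← intervalIntegral.integral_interval_sub_left (hbi 0 t) (hbi 0 s)]
    simp only [hE]
    rw [← Real.exp_neg, ← Real.exp_add]
    congr 1; simp only [hA]; ring
  simp_rw [e5]
  rw [integral_const_mul, ← e4]
  field_simp

/-- Variation-of-constants for a linear integral equation driven by a finite measure: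
if `Y t = ∫₀^t a s * Y s ds + μ [0,t]` on `[0,T]`, then
`Y t = ∫_{[0,t]} exp (∫_s^t a) dμ(s)`; hence, with `M = sup_{[0,T]} |a|`,
`Y t ≥ e^{-M t} μ [0,t]`, and `Y t > 0` whenever `μ [0,t] > 0`. -/
theorem stmt_6 (T : ℝ) (hT : 0 < T) (a : ℝ → ℝ) (ha_meas : Measurable a)
    (ha_bdd : ∃ K, ∀ s ∈ Icc 0 T, |a s| ≤ K)
    (μ : Measure ℝ) [IsFiniteMeasure μ]
    (Y : ℝ → ℝ) (hY_meas : Measurable Y) (hY_bdd : ∃ K, ∀ t ∈ Icc 0 T, |Y t| ≤ K)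
    (hY : ∀ t ∈ Icc 0 T, Y t = (∫ s in (0:ℝ)..t, a s * Y s) + (μ (Icc 0 t)).toReal) :
    (∀ t ∈ Icc 0 T, Y t = ∫ s in Icc (0:ℝ) t, Real.exp (∫ u in s..t, a u) ∂μ) ∧
    (∀ t ∈ Icc 0 T,
      Real.exp (-(sSup ((fun s => |a s|) '' Icc 0 T)) * t) * (μ (Icc 0 t)).toReal ≤ Y t) ∧
    (∀ t ∈ Icc 0 T, 0 < μ (Icc 0 t) → 0 < Y t) := by
  obtain ⟨K, hK⟩ := ha_bdd
  obtain ⟨L, hL⟩ := hY_bdd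
  have hK0 : 0 ≤ K := (abs_nonneg _).trans (hK 0 ⟨le_rfl, hT.le⟩)
  have hL0 : 0 ≤ L := (abs_nonneg _).trans (hL 0 ⟨le_rfl, hT.le⟩)
  have main : ∀ t ∈ Icc 0 T, Y t = ∫ s in Icc (0:ℝ) t, Real.exp (∫ u in s..t, a u) ∂μ := by
    intro t ht
    have hc := core t ht.1 ((Icc 0 T).indicator a) ((Icc 0 T).indicator Y)
      (ha_meas.indicator measurableSet_Icc) (hY_meas.indicator measurableSet_Icc) K L
      (fun s => by by_cases h : s ∈ Icc 0 T <;> simp only [indicator, h, if_true, if_false, abs_zero, hK0, hK s])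
      (fun s => by by_cases h : s ∈ Icc 0 T <;> simp only [indicator, h, if_true, if_false, abs_zero, hL0, hL s])
      μ (fun r hr => by
        have hrT : r ∈ Icc 0 T := ⟨hr.1, hr.2.trans ht.2⟩
        rw [indicator_of_mem hrT, hY r hrT]
        congr 1
        apply intervalIntegral.integral_congr
        intro s hs
        rw [uIcc_of_le hr.1] at hs
        have hsT : s ∈ Icc 0 T := ⟨hs.1, hs.2.trans hrT.2⟩
        simp only [indicator_of_mem hsT])
    rw [indicator_of_mem ht] at hc
    rw [hc]
    apply setIntegral_congr_fun measurableSet_Icc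
    intro s hs
    simp only
    congr 1
    apply intervalIntegral.integral_congr
    intro u hu
    rw [uIcc_of_le hs.2] at hu
    have huT : u ∈ Icc 0 T := ⟨hs.1.trans hu.1, hu.2.trans ht.2⟩
    exact indicator_of_mem huT a
  have hbdd : BddAbove ((fun s => |a s|) '' Icc 0 T) := by
    refine ⟨K, ?_⟩
    rintro _ ⟨s, hs, rfl⟩
    exact hK s hs
  set M := sSup ((fun s => |a s|) '' Icc 0 T) with hM
  have hMa : ∀ s ∈ Icc 0 T, |a s| ≤ M := fun s hs => le_csSup hbdd ⟨s, hs, rfl⟩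
  have hM0 : 0 ≤ M := (abs_nonneg _).trans (hMa 0 ⟨le_rfl, hT.le⟩)
  have low : ∀ t ∈ Icc 0 T, Real.exp (-M * t) * (μ (Icc 0 t)).toReal ≤ Y t := by
    intro t ht
    have hbi : IntegrableOn a (Icc 0 T) volume :=
      Measure.integrableOn_of_bounded (M := K) (by simp) ha_meas.aestronglyMeasurable
        ((ae_restrict_mem measurableSet_Icc).mono fun s hs => hK s hs)
    have hii : IntervalIntegrable a volume 0 t :=
      (intervalIntegrable_iff_integrableOn_Icc_of_le ht.1).2
        (hbi.mono_set (Icc_subset_Icc_right ht.2))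
    have hbound : ∀ s ∈ Icc 0 t, |∫ u in s..t, a u| ≤ M * t := by
      intro s hs
      have h := intervalIntegral.norm_integral_le_of_norm_le_const (a := s) (b := t) (C := M)
        (f := a) (fun u hu => by
          rw [uIoc_of_le hs.2] at hu
          exact hMa u ⟨hs.1.trans hu.1.le, hu.2.trans ht.2⟩)
      refine h.trans ?_
      rw [abs_of_nonneg (sub_nonneg.2 hs.2)]
      exact mul_le_mul_of_nonneg_left (by linarith [hs.1]) hM0
    have hcont : ContinuousOn (fun s => Real.exp (∫ u in s..t, a u)) (Icc 0 t) := by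
      apply Real.continuous_exp.comp_continuousOn
      have h1 : ContinuousOn (fun s => ∫ u in t..s, a u) (uIcc 0 t) :=
        intervalIntegral.continuousOn_primitive_interval' hii (by simp)
      rw [uIcc_of_le ht.1] at h1
      refine h1.neg.congr fun s _ => ?_
      exact intervalIntegral.integral_symm _ _
    rw [main t ht]
    have h := setIntegral_mono_on (μ := μ) (s := Icc 0 t) (f := fun _ => Real.exp (-M * t))
      (integrable_const _) hcont.integrableOn_Icc measurableSet_Icc
      (fun s hs => Real.exp_le_exp.2 (by linarith [(abs_le.1 (hbound s hs)).1]))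
    rw [setIntegral_const, smul_eq_mul, mul_comm] at h
    exact h
  refine ⟨main, low, fun t ht hpos => ?_⟩
  refine lt_of_lt_of_le ?_ (low t ht)
  exact mul_pos (Real.exp_pos _) (ENNReal.toReal_pos hpos.ne' (measure_ne_top _ _))
end
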